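/- Let H* be a regular hexagon with |H*| = 1. Then for every H ∈ 𝓗 with |H| = 1 one has 𝓗¹(∂H*) ≤ 𝓗¹(∂H); that is, among convex polygons of unit area that tile the plane by translations, the regular hexagon minimizes the perimeter. -/

import Mathlib

open MeasureTheory Metric Filter Real Set
open scoped Topology ENNReal NNReal RealInnerProductSpace

noncomputable section

/-- The Euclidean plane. -/
abbrev E2 : Type := EuclideanSpace ℝ (Fin 2)

/-- The line through `x` with direction `v`. -/
def lineThrough (x v : E2) : Set E2 := {y : E2 | ∃ t : ℝ, y = x + t • v}

/-- Steiner symmetrization of `A` with respect to the affine line `{x | ⟪x, v⟫ = c}`,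
where `v` is a unit normal vector of the line. -/
def steiner (v : E2) (c : ℝ) (A : Set E2) : Set E2 :=
  {y : E2 | ∃ x : E2, ⟪x, v⟫ = c ∧ (A ∩ lineThrough x v).Nonempty ∧
    ∃ r : ℝ, y = x + r • v ∧
      ENNReal.ofReal (2 * |r|) ≤ μH[1] (A ∩ lineThrough x v)}

/-- The class `𝓗` of centrally symmetric convex hexagons (possibly degenerated to
parallelograms), i.e. the convex polygons tiling the plane by translations. -/
def Hex (H : Set E2) : Prop :=
  (∃ x₀ p q r : E2, H = (fun y => x₀ + y) '' convexHull ℝ ({p, q, r, -p, -q, -r} : Set E2)) ∧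
  (interior H).Nonempty

/-- The `k`-th vertex of the standard regular hexagon. -/
def hexVertex (k : ℕ) : E2 :=
  (WithLp.equiv 2 (Fin 2 → ℝ)).symm ![Real.cos (k * π / 3), Real.sin (k * π / 3)]

/-- The standard regular hexagon, with vertices `(cos (kπ/3), sin (kπ/3))`, `k = 0, …, 5`. -/
def stdHexagon : Set E2 := convexHull ℝ (Set.range fun k : Fin 6 => hexVertex k)

/-- A similarity of the plane (composition of a rotation, a dilation and a translation,
possibly with a reflection). -/
def IsSimilarity (f : E2 → E2) : Prop :=
  ∃ s : ℝ, 0 < s ∧ ∀ x y, dist (f x) (f y) = s * dist x y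

/-- A regular hexagon is any image of the standard one under a similarity. -/
def IsRegularHexagon (H : Set E2) : Prop := ∃ f : E2 → E2, IsSimilarity f ∧ H = f '' stdHexagon

/-- Convergence of a sequence of sets in the Hausdorff distance. -/
def HausdorffTendsto (Hn : ℕ → Set E2) (H : Set E2) : Prop :=
  Tendsto (fun n => EMetric.hausdorffEdist (Hn n) H) atTop (𝓝 0)

/-- The planar cross product (determinant) of two vectors. -/
def det2 (u w : E2) : ℝ := u 0 * w 1 - u 1 * w 0

/-- `A, B, C, D, E, F` are (consecutive) vertices of the centrally symmetric hexagon `H`: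
`H` is their convex hull, `D, E, F` are the antipodes of `A, B, C` with respect to a center
`o`, and `H` has nonempty interior. -/
def HexWithVertices (A B C D E F : E2) (H : Set E2) : Prop :=
  H = convexHull ℝ ({A, B, C, D, E, F} : Set E2) ∧
  (∃ o : E2, D = (2:ℝ) • o - A ∧ E = (2:ℝ) • o - B ∧ F = (2:ℝ) • o - C) ∧
  (interior H).Nonempty

/-- The vertices `A, B, C, D, E, F` are listed in counterclockwise order. -/
def CCWList (A B C D E F : E2) : Prop :=
  0 ≤ det2 (B - A) (C - B) ∧ 0 ≤ det2 (C - B) (D - C) ∧ 0 ≤ det2 (D - C) (E - D) ∧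
  0 ≤ det2 (E - D) (F - E) ∧ 0 ≤ det2 (F - E) (A - F) ∧ 0 ≤ det2 (A - F) (B - A)

/-- The six vertices are distinct and no three of them are collinear. -/
def NondegenerateHex (A B C D E F : E2) : Prop :=
  [A, B, C, D, E, F].Pairwise (· ≠ ·) ∧
  ∀ P Q R : E2, P ∈ ({A, B, C, D, E, F} : Set E2) → Q ∈ ({A, B, C, D, E, F} : Set E2) →
    R ∈ ({A, B, C, D, E, F} : Set E2) → P ≠ Q → P ≠ R → Q ≠ R →
      ¬ Collinear ℝ ({P, Q, R} : Set E2)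

/-!
Every `K ∈ 𝓗` satisfies `8√3 · |K| ≤ 𝓗¹(∂K)²`, with equality for the regular hexagon.

If `u`, `v`, `w` are the edge vectors of half the boundary of a centrally symmetric hexagon, its
perimeter is `2L` with `L = ‖u‖ + ‖v‖ + ‖w‖`, and decomposing it into triangles with apex at the
center shows that its area is `S = |det2 u v| + |det2 v w| + |det2 u w|`. Replace each edge vector
by the vector of the same length and twice the polar angle: the sum of the new vectors has
nonnegative squared norm, which reads
`4 (det2 u v ^ 2 / (‖u‖‖v‖) + det2 v w ^ 2 / (‖v‖‖w‖) + det2 u w ^ 2 / (‖u‖‖w‖)) ≤ L ^ 2`.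
By Cauchy–Schwarz and `‖u‖‖v‖ + ‖v‖‖w‖ + ‖u‖‖w‖ ≤ L ^ 2 / 3` it follows that `12 S ^ 2 ≤ L ^ 4`.
-/

section Similarity

open scoped Pointwise

variable {E : Type*} [NormedAddCommGroup E] [NormedSpace ℝ E] {f : E → E} {s : ℝ}

theorem isometry_inv_smul_of_dist_eq (hs : 0 < s) (hf : ∀ x y, dist (f x) (f y) = s * dist x y) :
    Isometry fun x => s⁻¹ • f x :=
  Isometry.of_dist_eq fun x y => by
    rw [dist_smul₀, hf, Real.norm_of_nonneg (inv_nonneg.2 hs.le), inv_mul_cancel_left₀ hs.ne']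

theorem image_eq_smul_image_of_pos (hs : 0 < s) (A : Set E) :
    f '' A = s • (fun x => s⁻¹ • f x) '' A := by
  simp only [← image_smul, image_image, smul_inv_smul₀ hs.ne']

theorem hausdorffMeasure_image_of_dist_eq [MeasurableSpace E] [BorelSpace E] (hs : 0 < s)
    (hf : ∀ x y, dist (f x) (f y) = s * dist x y) {d : ℝ} (hd : 0 ≤ d) (A : Set E) :
    μH[d] (f '' A) = ENNReal.ofReal s ^ d * μH[d] A := by
  rw [image_eq_smul_image_of_pos hs, Measure.hausdorffMeasure_smul₀ hd hs.ne',
    (isometry_inv_smul_of_dist_eq hs hf).hausdorffMeasure_image (Or.inl hd), ENNReal.smul_def,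
    smul_eq_mul, ENNReal.coe_rpow_of_nonneg _ hd, ← enorm_eq_nnnorm, Real.enorm_of_nonneg hs.le]

theorem volume_image_of_dist_eq {d : ℕ} {f : EuclideanSpace ℝ (Fin d) → EuclideanSpace ℝ (Fin d)}
    (hs : 0 < s) (hf : ∀ x y, dist (f x) (f y) = s * dist x y)
    (A : Set (EuclideanSpace ℝ (Fin d))) :
    volume (f '' A) = ENNReal.ofReal s ^ d * volume A := by
  rw [← EuclideanSpace.euclideanHausdorffMeasure_eq_volume, Measure.euclideanHausdorffMeasure_def,
    Measure.smul_apply, Measure.smul_apply, hausdorffMeasure_image_of_dist_eq hs hf d.cast_nonneg,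
    ENNReal.rpow_natCast, mul_smul_comm]

theorem frontier_image_of_dist_eq [StrictConvexSpace ℝ E] [FiniteDimensional ℝ E] (hs : 0 < s)
    (hf : ∀ x y, dist (f x) (f y) = s * dist x y) (A : Set E) :
    frontier (f '' A) = f '' frontier A := by
  have : Inhabited E := ⟨0⟩
  let e : E ≃ₜ E := ((isometry_inv_smul_of_dist_eq hs hf).affineIsometryOfStrictConvexSpace
    |>.toAffineIsometryEquiv rfl).toHomeomorph
  have hf_eq : f = e.trans (Homeomorph.smulOfNeZero s hs.ne') :=
    funext fun x => (smul_inv_smul₀ hs.ne' (f x)).symm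
  rw [hf_eq, Homeomorph.image_frontier]

end Similarity

section Det

theorem det2_self (u : E2) : det2 u u = 0 := by
  simp only [det2]; ring

theorem neg_det2 (u w : E2) : -det2 u w = det2 w u := by
  simp only [det2]; ring

theorem det2_neg_left (u w : E2) : det2 (-u) w = -det2 u w := by
  simp only [det2, PiLp.neg_apply]; ring

theorem det2_neg_right (u w : E2) : det2 u (-w) = -det2 u w := by
  simp only [det2, PiLp.neg_apply]; ring

theorem det2_sub_right (u w z : E2) : det2 u (w - z) = det2 u w - det2 u z := by
  simp only [det2, PiLp.sub_apply]; ring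

theorem det2_sub_left (u w z : E2) : det2 (u - w) z = det2 u z - det2 w z := by
  simp only [det2, PiLp.sub_apply]; ring

theorem det2_smul_left (c : ℝ) (u w : E2) : det2 (c • u) w = c * det2 u w := by
  simp only [det2, PiLp.smul_apply, smul_eq_mul]; ring

theorem det2_smul_right (c : ℝ) (u w : E2) : det2 u (c • w) = c * det2 u w := by
  simp only [det2, PiLp.smul_apply, smul_eq_mul]; ring

theorem det2_add_left (u w z : E2) : det2 (u + w) z = det2 u z + det2 w z := by
  simp only [det2, PiLp.add_apply]; ring

theorem det2_add_right (u w z : E2) : det2 u (w + z) = det2 u w + det2 u z := by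
  simp only [det2, PiLp.add_apply]; ring

@[fun_prop]
theorem continuous_det2 {X : Type*} [TopologicalSpace X] {f g : X → E2} (hf : Continuous f)
    (hg : Continuous g) : Continuous fun x => det2 (f x) (g x) := by
  unfold det2
  fun_prop

theorem det2_sub_eq_add (p q x : E2) : det2 x (q - p) = det2 x q + det2 p x := by
  rw [det2_sub_right, sub_eq_add_neg, neg_det2]

theorem det2_smul_eq (p q x : E2) : det2 p q • x = det2 x q • p + det2 p x • q := by
  ext i
  fin_cases i <;> simp [det2] <;> ring

theorem det2_mul_det2 (p q x z : E2) :
    det2 x z * det2 p q = det2 x q * det2 p z + det2 p x * det2 q z := by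
  rw [mul_comm, ← det2_smul_left, det2_smul_eq, det2_add_left, det2_smul_left, det2_smul_left]

theorem det2_sub_mul_det2 (x a b c : E2) :
    det2 x (b - a) * det2 b c - det2 x (c - b) * det2 a b =
      det2 (b - a) (c - b) * det2 x b := by
  simp only [det2, PiLp.sub_apply]; ring

theorem eq_smul_add_smul_of_det2_ne_zero {p q : E2} (h : det2 p q ≠ 0) (x : E2) :
    x = (det2 x q / det2 p q) • p + (det2 p x / det2 p q) • q := by
  rw [div_eq_inv_mul, div_eq_inv_mul, mul_smul, mul_smul, ← smul_add, ← det2_smul_eq,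
    inv_smul_smul₀ h]

theorem ne_zero_of_det2_ne_zero {p q : E2} (h : det2 p q ≠ 0) : p ≠ 0 := by
  rintro rfl
  simp [det2] at h

theorem volume_det2_eq_zero {v : E2} (hv : v ≠ 0) : volume {x : E2 | det2 v x = 0} = 0 := by
  let φ : E2 →ₗ[ℝ] ℝ := IsLinearMap.mk' (det2 v) ⟨det2_add_right v, fun c => det2_smul_right c v⟩
  have hφ : φ.ker ≠ ⊤ := fun htop => hv <| by
    have h (x : E2) : det2 v x = 0 := htop.ge (Submodule.mem_top (x := x))
    have h0 := h !₂[0, 1]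
    have h1 := h !₂[1, 0]
    ext i
    fin_cases i
    · simpa [det2] using h0
    · simpa [det2] using h1
  exact Measure.addHaar_submodule volume φ.ker hφ

end Det

section Triangle

theorem volume_unit_triangle_slice (a : ℝ) :
    volume {b : ℝ | 0 ≤ a ∧ 0 ≤ b ∧ a + b ≤ 1} =
      (Icc (0 : ℝ) 1).indicator (fun a => ENNReal.ofReal (1 - a)) a := by
  by_cases ha : a ∈ Icc (0 : ℝ) 1
  · have hslice : {b : ℝ | 0 ≤ a ∧ 0 ≤ b ∧ a + b ≤ 1} = Icc 0 (1 - a) := by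
      ext b
      exact ⟨fun h => ⟨h.2.1, by linarith [h.2.2]⟩, fun h => ⟨ha.1, h.1, by linarith [h.2]⟩⟩
    rw [hslice, Real.volume_Icc, sub_zero, indicator_of_mem ha]
  · have hslice : {b : ℝ | 0 ≤ a ∧ 0 ≤ b ∧ a + b ≤ 1} = ∅ :=
      eq_empty_of_forall_notMem fun b h => ha ⟨h.1, by linarith [h.2.1, h.2.2]⟩
    rw [hslice, measure_empty, indicator_of_notMem ha]

theorem lintegral_Icc_ofReal_one_sub :
    ∫⁻ a in Icc (0 : ℝ) 1, ENNReal.ofReal (1 - a) = ENNReal.ofReal (1 / 2) := by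
  rw [← ofReal_integral_eq_lintegral_ofReal, integral_Icc_eq_integral_Ioc,
    ← intervalIntegral.integral_of_le zero_le_one,
    intervalIntegral.integral_sub (by simp) (by simp), intervalIntegral.integral_const, integral_id]
  · norm_num
  · exact (by fun_prop : Continuous fun a : ℝ => 1 - a).integrableOn_Icc
  · filter_upwards [ae_restrict_mem measurableSet_Icc] with a ha using sub_nonneg.2 ha.2

theorem volume_unit_triangle :
    volume {x : E2 | 0 ≤ x 0 ∧ 0 ≤ x 1 ∧ x 0 + x 1 ≤ 1} = ENNReal.ofReal (1 / 2) := by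
  have hm : MeasurableSet {z : ℝ × ℝ | 0 ≤ z.1 ∧ 0 ≤ z.2 ∧ z.1 + z.2 ≤ 1} := by
    measurability
  refine (((volume_preserving_finTwoArrow ℝ).comp
    (EuclideanSpace.volume_preserving_symm_measurableEquiv_toLp (Fin 2))).measure_preimage
      hm.nullMeasurableSet).trans ?_
  rw [Measure.volume_eq_prod, Measure.prod_apply hm, ← lintegral_Icc_ofReal_one_sub,
    ← lintegral_indicator measurableSet_Icc]
  exact lintegral_congr volume_unit_triangle_slice

/-- The closed convex cone spanned by `p` and `q`, provided that `0 < det2 p q`. -/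
def closedCone (p q : E2) : Set E2 := {x | 0 ≤ det2 p x ∧ 0 ≤ det2 x q}

/-- The open convex cone spanned by `p` and `q`, provided that `0 < det2 p q`. -/
def openCone (p q : E2) : Set E2 := {x | 0 < det2 p x ∧ 0 < det2 x q}

/-- The triangle with vertices `0`, `p`, `q`, provided that `0 < det2 p q`; the last inequality
says on which side of the line through `p` and `q` a point lies. -/
def centralTriangle (p q : E2) : Set E2 := {x ∈ closedCone p q | det2 x (q - p) ≤ det2 p q}

variable {p q : E2}

theorem isClosed_closedCone (p q : E2) : IsClosed (closedCone p q) :=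
  (isClosed_le continuous_const (by fun_prop : Continuous fun x => det2 p x)).inter
    (isClosed_le continuous_const (by fun_prop : Continuous fun x => det2 x q))

theorem volume_closedCone_diff_openCone (hpq : det2 p q ≠ 0) :
    volume (closedCone p q \ openCone p q) = 0 := by
  have hq : q ≠ 0 := ne_zero_of_det2_ne_zero (p := q) (q := p) (by rwa [← neg_det2, neg_ne_zero])
  refine measure_mono_null (fun x hx => ?_)
    (measure_union_null (volume_det2_eq_zero (ne_zero_of_det2_ne_zero hpq))
      (volume_det2_eq_zero hq))
  by_contra! hne
  simp only [mem_union, mem_ofPred_eq, not_or] at hne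
  rw [← neg_det2 x q, neg_eq_zero] at hne
  exact hx.2 ⟨hx.1.1.lt_of_ne' hne.1, hx.1.2.lt_of_ne' hne.2⟩

theorem toEuclideanLin_columns_apply (p q y : E2) :
    Matrix.toEuclideanLin !![p 0, q 0; p 1, q 1] y = y 0 • p + y 1 • q := by
  ext i
  fin_cases i <;> simp [Matrix.toLpLin_apply, dotProduct, Fin.sum_univ_two] <;> ring

theorem centralTriangle_eq_image (h : 0 < det2 p q) :
    centralTriangle p q = Matrix.toEuclideanLin !![p 0, q 0; p 1, q 1] ''
      {x : E2 | 0 ≤ x 0 ∧ 0 ≤ x 1 ∧ x 0 + x 1 ≤ 1} := by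
  ext x
  simp only [mem_image, toEuclideanLin_columns_apply]
  constructor
  · rintro ⟨⟨hp, hq⟩, hle⟩
    refine ⟨!₂[det2 x q / det2 p q, det2 p x / det2 p q], ⟨?_, ?_, ?_⟩,
      (eq_smul_add_smul_of_det2_ne_zero h.ne' x).symm⟩
    · exact div_nonneg hq h.le
    · exact div_nonneg hp h.le
    · change det2 x q / det2 p q + det2 p x / det2 p q ≤ 1
      rwa [← add_div, div_le_one h, ← det2_sub_eq_add]
  · rintro ⟨y, ⟨h0, h1, hle⟩, rfl⟩
    refine ⟨⟨?_, ?_⟩, ?_⟩ <;> simp only [det2_add_left, det2_add_right, det2_smul_left,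
      det2_smul_right, det2_sub_right, det2_self, ← neg_det2 p q] <;> nlinarith

theorem volume_centralTriangle (h : 0 < det2 p q) :
    volume (centralTriangle p q) = ENNReal.ofReal (det2 p q / 2) := by
  have hdet : LinearMap.det (Matrix.toEuclideanLin !![p 0, q 0; p 1, q 1]) = det2 p q := by
    simp only [Matrix.toLpLin_eq_toLin, LinearMap.det_toLin, Matrix.det_fin_two_of, det2]
    ring
  rw [centralTriangle_eq_image h, Measure.addHaar_image_linearMap, hdet, volume_unit_triangle,
    abs_of_pos h, ← ENNReal.ofReal_mul h.le, mul_one_div]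

theorem centralTriangle_subset (h : 0 < det2 p q) {C : Set E2} (hC : Convex ℝ C) (h0 : 0 ∈ C)
    (hp : p ∈ C) (hq : q ∈ C) : centralTriangle p q ⊆ C := by
  rw [centralTriangle_eq_image h]
  rintro _ ⟨y, ⟨hy0, hy1, hle⟩, rfl⟩
  rw [toEuclideanLin_columns_apply]
  have hmem := hC.sum_mem (t := Finset.univ) (w := ![1 - (y 0 + y 1), y 0, y 1]) (z := ![0, p, q])
    (by simpa [Fin.forall_fin_succ] using ⟨hle, hy0, hy1⟩) (by simp [Fin.sum_univ_three, add_assoc])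
    (by simpa [Fin.forall_fin_succ] using ⟨h0, hp, hq⟩)
  simpa [Fin.sum_univ_three] using hmem

theorem segment_eq_of_det2_pos (h : 0 < det2 p q) :
    segment ℝ p q = {x ∈ closedCone p q | det2 x (q - p) = det2 p q} := by
  ext x
  constructor
  · rintro ⟨a, b, ha, hb, hab, rfl⟩
    refine ⟨⟨?_, ?_⟩, ?_⟩ <;> simp only [det2_add_left, det2_add_right, det2_smul_left,
      det2_smul_right, det2_sub_right, det2_self, ← neg_det2 p q]
    · nlinarith
    · nlinarith
    · linear_combination det2 p q * hab
  · rintro ⟨⟨hp, hq⟩, heq⟩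
    refine ⟨_, _, div_nonneg hq h.le, div_nonneg hp h.le, ?_,
      (eq_smul_add_smul_of_det2_ne_zero h.ne' x).symm⟩
    rw [← add_div, div_eq_one_iff_eq h.ne', ← det2_sub_eq_add, heq]

theorem openSegment_subset_openCone (h : 0 < det2 p q) : openSegment ℝ p q ⊆ openCone p q := by
  rintro x ⟨a, b, ha, hb, -, rfl⟩
  constructor <;> simp only [det2_add_left, det2_add_right, det2_smul_left, det2_smul_right,
    det2_self] <;> nlinarith

theorem segment_diff_openCone_subset (h : 0 < det2 p q) :
    segment ℝ p q \ openCone p q ⊆ {p, q} := by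
  rw [← insert_endpoints_openSegment, sdiff_subset_iff, union_comm, insert_union, singleton_union]
  exact insert_subset_insert (insert_subset_insert (openSegment_subset_openCone h))

end Triangle

/-- `v 0, …, v (n - 1)` are the vertices, in counterclockwise order, of a strictly convex polygon
containing the origin in its interior. Indices are taken modulo `n`, and the second condition says
that the polygon touches the line through `v i` and `v (i + 1)` in no further vertex. -/
structure IsConvexPolygonAroundZero {n : ℕ} [NeZero n] (v : Fin n → E2) : Prop where
  det2_pos : ∀ i, 0 < det2 (v i) (v (i + 1))
  det2_lt : ∀ i j, j ≠ i → j ≠ i + 1 → det2 (v j) (v (i + 1) - v i) < det2 (v i) (v (i + 1))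

namespace IsConvexPolygonAroundZero

variable {n : ℕ} [NeZero n] {v : Fin n → E2}

theorem det2_le (h : IsConvexPolygonAroundZero v) (i j : Fin n) :
    det2 (v j) (v (i + 1) - v i) ≤ det2 (v i) (v (i + 1)) := by
  by_cases hi : j = i
  · rw [hi, det2_sub_right, det2_self, sub_zero]
  by_cases hi' : j = i + 1
  · rw [hi', det2_sub_right, det2_self, zero_sub, neg_det2]
  exact (h.det2_lt i j hi hi').le

theorem add_one_ne (h : IsConvexPolygonAroundZero v) (i : Fin n) : i + 1 ≠ i := fun hi =>
  (h.det2_pos i).ne' <| by rw [hi, det2_self]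

theorem add_one_add_one_ne (h : IsConvexPolygonAroundZero v) (i : Fin n) : i + 1 + 1 ≠ i :=
  fun hi => by
    have hpos := h.det2_pos (i + 1)
    rw [hi, ← neg_det2] at hpos
    linarith [h.det2_pos i]

theorem det2_edge_pos (h : IsConvexPolygonAroundZero v) (i : Fin n) :
    0 < det2 (v (i + 1) - v i) (v (i + 1 + 1) - v (i + 1)) := by
  have hlt := h.det2_lt i (i + 1 + 1) (h.add_one_add_one_ne i) (h.add_one_ne (i + 1))
  rw [← neg_det2, det2_sub_left, det2_sub_right (v (i + 1)), det2_self, zero_sub, neg_det2]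
  linarith

/-- The cone containing `x` is the one over the side whose supporting line is the first to be
crossed by the ray from the origin through `x`. -/
theorem exists_mem_closedCone (h : IsConvexPolygonAroundZero v) (x : E2) :
    ∃ i, x ∈ closedCone (v i) (v (i + 1)) := by
  obtain ⟨i, hi⟩ := Finite.exists_max fun i =>
    det2 x (v (i + 1) - v i) / det2 (v i) (v (i + 1))
  simp only [div_le_div_iff₀ (h.det2_pos _) (h.det2_pos _)] at hi
  have hturn (j : Fin n) := det2_sub_mul_det2 x (v j) (v (j + 1)) (v (j + 1 + 1))
  refine ⟨i, ?_, ?_⟩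
  · have hprev := hturn (i - 1)
    have hpos := h.det2_edge_pos (i - 1)
    have hmax := hi (i - 1)
    rw [sub_add_cancel] at hprev hpos hmax
    rw [← neg_det2, neg_nonneg]
    exact nonpos_of_mul_nonpos_right (hprev ▸ sub_nonpos.2 hmax) hpos
  · exact nonneg_of_mul_nonneg_right (hturn i ▸ sub_nonneg.2 (hi (i + 1))) (h.det2_edge_pos i)

theorem det2_mul_le (h : IsConvexPolygonAroundZero v) {i : Fin n} {x : E2}
    (hx : x ∈ closedCone (v i) (v (i + 1))) (j : Fin n) :
    det2 x (v (j + 1) - v j) * det2 (v i) (v (i + 1)) ≤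
      det2 x (v (i + 1) - v i) * det2 (v j) (v (j + 1)) := by
  rw [det2_mul_det2, det2_sub_eq_add (v i), add_mul]
  exact add_le_add (mul_le_mul_of_nonneg_left (h.det2_le j i) hx.2)
    (mul_le_mul_of_nonneg_left (h.det2_le j (i + 1)) hx.1)

theorem det2_mul_lt (h : IsConvexPolygonAroundZero v) {i j : Fin n} (hij : i ≠ j) {x : E2}
    (hx : x ∈ openCone (v i) (v (i + 1))) :
    det2 x (v (j + 1) - v j) * det2 (v i) (v (i + 1)) <
      det2 x (v (i + 1) - v i) * det2 (v j) (v (j + 1)) := by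
  rw [det2_mul_det2, det2_sub_eq_add (v i), add_mul]
  by_cases hi : i = j + 1
  · have hi' : i + 1 ≠ j := fun hj => h.add_one_add_one_ne j (by rw [← hi, hj])
    exact add_lt_add_of_le_of_lt (mul_le_mul_of_nonneg_left (h.det2_le j i) hx.2.le)
      (mul_lt_mul_of_pos_left (h.det2_lt j (i + 1) hi' fun hij' => hij (add_right_cancel hij'))
        hx.1)
  · exact add_lt_add_of_lt_of_le (mul_lt_mul_of_pos_left (h.det2_lt j i hij hi) hx.2)
      (mul_le_mul_of_nonneg_left (h.det2_le j (i + 1)) hx.1.le)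

theorem disjoint_openCone (h : IsConvexPolygonAroundZero v) {i j : Fin n} (hij : i ≠ j) :
    Disjoint (openCone (v i) (v (i + 1))) (openCone (v j) (v (j + 1))) :=
  disjoint_left.2 fun _ hi hj => (h.det2_mul_lt hij hi).asymm (h.det2_mul_lt hij.symm hj)

/-- `0` is a positive combination of `v 0` and the endpoints of a side over which `-v 0` lies. -/
theorem zero_mem_convexHull (h : IsConvexPolygonAroundZero v) :
    (0 : E2) ∈ convexHull ℝ (range v) := by
  obtain ⟨i, hi⟩ := h.exists_mem_closedCone (-v 0)
  have hd := h.det2_pos i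
  let w : Fin 3 → ℝ := ![det2 (v i) (v (i + 1)), det2 (-v 0) (v (i + 1)), det2 (v i) (-v 0)]
  have hmem := Finset.univ.centerMass_mem_convexHull (s := range v) (w := w)
    (z := ![v 0, v i, v (i + 1)])
    (by simpa [w, Fin.forall_fin_succ] using ⟨hd.le, hi.2, hi.1⟩)
    (by simpa [w, Fin.sum_univ_three] using by linarith [hi.1, hi.2])
    (by simp [Fin.forall_fin_succ])
  have hsum : ∑ k, w k • ![v 0, v i, v (i + 1)] k = 0 := by
    simp [w, Fin.sum_univ_three, add_assoc, ← det2_smul_eq]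
  rwa [Finset.centerMass, hsum, smul_zero] at hmem

theorem convexHull_range_eq (h : IsConvexPolygonAroundZero v) :
    convexHull ℝ (range v) = {x | ∀ i, det2 x (v (i + 1) - v i) ≤ det2 (v i) (v (i + 1))} := by
  apply Subset.antisymm
  · refine convexHull_min (range_subset_iff.2 fun j i => h.det2_le i j) ?_
    rw [ofPred_forall]
    exact convex_iInter fun i => convex_halfSpace_le
      ⟨fun x y => det2_add_left x y _, fun c x => det2_smul_left c x _⟩ _
  · intro x hx
    obtain ⟨i, hi⟩ := h.exists_mem_closedCone x
    exact centralTriangle_subset (h.det2_pos i) (convex_convexHull ℝ _) h.zero_mem_convexHull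
      (subset_convexHull ℝ _ ⟨i, rfl⟩) (subset_convexHull ℝ _ ⟨i + 1, rfl⟩) ⟨hi, hx i⟩

theorem convexHull_range_inter_closedCone (h : IsConvexPolygonAroundZero v) (i : Fin n) :
    convexHull ℝ (range v) ∩ closedCone (v i) (v (i + 1)) =
      centralTriangle (v i) (v (i + 1)) := by
  rw [h.convexHull_range_eq]
  refine Subset.antisymm (fun x hx => ⟨hx.2, hx.1 i⟩) fun x hx => ⟨fun j => ?_, hx.1⟩
  refine le_of_mul_le_mul_right ((h.det2_mul_le hx.1 j).trans ?_) (h.det2_pos i)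
  rw [mul_comm (det2 (v j) _)]
  exact mul_le_mul_of_nonneg_right hx.2 (h.det2_pos j).le

theorem interior_convexHull_range (h : IsConvexPolygonAroundZero v) :
    interior (convexHull ℝ (range v)) =
      {x | ∀ i, det2 x (v (i + 1) - v i) < det2 (v i) (v (i + 1))} := by
  rw [h.convexHull_range_eq]
  apply Subset.antisymm
  · intro x hx i
    have hscale : ∀ᶠ t in 𝓝[>] (1 : ℝ), t • x ∈ interior {x | ∀ i, det2 x (v (i + 1) - v i) ≤
        det2 (v i) (v (i + 1))} :=
      ((continuous_id.smul continuous_const).tendsto' 1 x (one_smul ℝ x)).eventually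
        (isOpen_interior.mem_nhds hx) |>.filter_mono nhdsWithin_le_nhds
    obtain ⟨t, htx, ht⟩ := (hscale.and self_mem_nhdsWithin).exists
    have hti := interior_subset htx i
    rw [det2_smul_left] at hti
    nlinarith [h.det2_pos i]
  · refine interior_maximal (fun x hx i => (hx i).le) ?_
    rw [ofPred_forall]
    exact isOpen_iInter_of_finite fun i => isOpen_lt (by fun_prop) continuous_const

theorem frontier_convexHull_range_inter_closedCone (h : IsConvexPolygonAroundZero v) (i : Fin n) :
    frontier (convexHull ℝ (range v)) ∩ closedCone (v i) (v (i + 1)) =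
      segment ℝ (v i) (v (i + 1)) := by
  rw [((finite_range v).isClosed_convexHull ℝ).frontier_eq, ← inter_sdiff_right_comm,
    h.convexHull_range_inter_closedCone, h.interior_convexHull_range,
    segment_eq_of_det2_pos (h.det2_pos i)]
  ext x
  simp only [centralTriangle, Set.mem_sdiff, mem_ofPred_eq, not_forall, not_lt]
  constructor
  · rintro ⟨⟨hx, hle⟩, j, hj⟩
    refine ⟨hx, hle.antisymm (le_of_mul_le_mul_right ?_ (h.det2_pos j))⟩
    rw [mul_comm]
    exact (mul_le_mul_of_nonneg_right hj (h.det2_pos i).le).trans (h.det2_mul_le hx j)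
  · exact fun ⟨hx, heq⟩ => ⟨⟨hx, heq.le⟩, i, heq.ge⟩

theorem measure_eq_sum_inter_closedCone (h : IsConvexPolygonAroundZero v) (μ : Measure E2)
    {A : Set E2} (hA : MeasurableSet A)
    (hnull : ∀ i, μ ((A ∩ closedCone (v i) (v (i + 1))) \ openCone (v i) (v (i + 1))) = 0) :
    μ A = ∑ i, μ (A ∩ closedCone (v i) (v (i + 1))) := by
  have hcover : A = ⋃ i, A ∩ closedCone (v i) (v (i + 1)) := by
    rw [← inter_iUnion, inter_eq_left.2 fun x _ => mem_iUnion.2 (h.exists_mem_closedCone x)]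
  have hdisj : Pairwise (Function.onFun (AEDisjoint μ)
      fun i => A ∩ closedCone (v i) (v (i + 1))) := fun i j hij => by
    refine measure_mono_null (fun x hx => ?_) (measure_union_null (hnull i) (hnull j))
    by_contra hne
    simp only [mem_union, Set.mem_sdiff, hx.1, hx.2, true_and, not_or, not_not] at hne
    exact disjoint_left.1 (h.disjoint_openCone hij) hne.1 hne.2
  conv_lhs => rw [hcover]
  rw [measure_iUnion₀ hdisj fun i =>
    (hA.inter (isClosed_closedCone _ _).measurableSet).nullMeasurableSet, tsum_fintype]

theorem volume_convexHull_range (h : IsConvexPolygonAroundZero v) :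
    volume (convexHull ℝ (range v)) = ENNReal.ofReal ((∑ i, det2 (v i) (v (i + 1))) / 2) := by
  have hnull (i : Fin n) : volume ((convexHull ℝ (range v) ∩ closedCone (v i) (v (i + 1))) \
      openCone (v i) (v (i + 1))) = 0 :=
    measure_mono_null (sdiff_subset_sdiff_left inter_subset_right)
      (volume_closedCone_diff_openCone (h.det2_pos i).ne')
  rw [h.measure_eq_sum_inter_closedCone volume
    ((finite_range v).isClosed_convexHull ℝ).measurableSet hnull, Finset.sum_div,
    ENNReal.ofReal_sum_of_nonneg fun i _ => (half_pos (h.det2_pos i)).le]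
  exact Finset.sum_congr rfl fun i _ => by
    rw [h.convexHull_range_inter_closedCone, volume_centralTriangle (h.det2_pos i)]

theorem hausdorffMeasure_frontier_convexHull_range (h : IsConvexPolygonAroundZero v) :
    μH[1] (frontier (convexHull ℝ (range v))) =
      ENNReal.ofReal (∑ i, ‖v (i + 1) - v i‖) := by
  have := Measure.nullSingletonClass_hausdorff E2 one_pos
  have hside := h.frontier_convexHull_range_inter_closedCone
  have hnull (i : Fin n) : μH[1] ((frontier (convexHull ℝ (range v)) ∩
      closedCone (v i) (v (i + 1))) \ openCone (v i) (v (i + 1))) = 0 := by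
    rw [hside]
    exact measure_mono_null (segment_diff_openCone_subset (h.det2_pos i))
      ((toFinite _).measure_zero _)
  rw [h.measure_eq_sum_inter_closedCone μH[1] isClosed_frontier.measurableSet hnull,
    ENNReal.ofReal_sum_of_nonneg fun i _ => norm_nonneg _]
  exact Finset.sum_congr rfl fun i _ => by
    rw [hside, hausdorffMeasure_segment, edist_comm, edist_dist, dist_eq_norm]

theorem mul_volume_le_sq_hausdorffMeasure_frontier (h : IsConvexPolygonAroundZero v) {c : ℝ}
    (hc : 0 ≤ c) (hle : c * (∑ i, det2 (v i) (v (i + 1))) / 2 ≤ (∑ i, ‖v (i + 1) - v i‖) ^ 2) :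
    ENNReal.ofReal c * volume (convexHull ℝ (range v)) ≤
      μH[1] (frontier (convexHull ℝ (range v))) ^ 2 := by
  rw [h.volume_convexHull_range, h.hausdorffMeasure_frontier_convexHull_range,
    ← ENNReal.ofReal_mul hc, ← ENNReal.ofReal_pow (Finset.sum_nonneg fun i _ => norm_nonneg _),
    ← mul_div_assoc]
  exact ENNReal.ofReal_le_ofReal hle

end IsConvexPolygonAroundZero

section DoubleAngle

/-- The vector of the same length as `u` whose polar angle is twice that of `u`. -/
def doubleAngle (u : E2) : E2 := !₂[(u 0 ^ 2 - u 1 ^ 2) / ‖u‖, 2 * u 0 * u 1 / ‖u‖]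

theorem inner_doubleAngle (u w : E2) :
    ⟪doubleAngle u, doubleAngle w⟫ = ‖u‖ * ‖w‖ - 2 * (det2 u w ^ 2 / (‖u‖ * ‖w‖)) := by
  rcases eq_or_ne u 0 with rfl | hu
  · simp [doubleAngle, PiLp.inner_apply]
  rcases eq_or_ne w 0 with rfl | hw
  · simp [doubleAngle, PiLp.inner_apply]
  have hinner : ⟪doubleAngle u, doubleAngle w⟫ =
      ((u 0 ^ 2 - u 1 ^ 2) * (w 0 ^ 2 - w 1 ^ 2) + 4 * (u 0 * u 1) * (w 0 * w 1)) /
        (‖u‖ * ‖w‖) := by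
    simp only [doubleAngle, PiLp.inner_apply, Fin.sum_univ_two,
      Matrix.cons_val_zero, Matrix.cons_val_one, RCLike.inner_apply, conj_trivial]
    ring
  rw [hinner, ← mul_div_assoc, eq_sub_iff_add_eq, ← add_div,
    div_eq_iff (mul_ne_zero (norm_ne_zero_iff.2 hu) (norm_ne_zero_iff.2 hw)),
    ← pow_two, mul_pow, EuclideanSpace.norm_sq_eq, EuclideanSpace.norm_sq_eq]
  simp only [Fin.sum_univ_two, Real.norm_eq_abs, sq_abs, det2]
  ring

variable {ι : Type*} [Fintype ι] (u : ι → E2)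

/-- The difference of the two sides is half the squared length of `∑ i, doubleAngle (u i)`. -/
theorem two_mul_sum_sum_sq_det2_div_le :
    2 * ∑ i, ∑ j, det2 (u i) (u j) ^ 2 / (‖u i‖ * ‖u j‖) ≤ (∑ i, ‖u i‖) ^ 2 := by
  have h : 0 ≤ ⟪∑ i, doubleAngle (u i), ∑ i, doubleAngle (u i)⟫ := real_inner_self_nonneg
  simp only [sum_inner, inner_sum, inner_doubleAngle, Finset.sum_sub_distrib, ← Finset.mul_sum,
    ← Finset.sum_mul] at h
  rw [pow_two, Finset.sum_comm]
  linarith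

theorem sq_det2_le (u w : E2) :
    det2 u w ^ 2 ≤ det2 u w ^ 2 / (‖u‖ * ‖w‖) * (‖u‖ * ‖w‖) := by
  refine (div_mul_cancel_of_imp fun h => ?_).ge
  rcases mul_eq_zero.1 h with h | h <;> simp [det2, norm_eq_zero.1 h]

theorem sum_sum_offDiag_norm_mul_norm_le [DecidableEq ι] [Nonempty ι] :
    ∑ i, ∑ j, (if i = j then 0 else ‖u i‖ * ‖u j‖) ≤
      (1 - 1 / (Fintype.card ι : ℝ)) * (∑ i, ‖u i‖) ^ 2 := by
  have hoff (i j : ι) : (if i = j then 0 else ‖u i‖ * ‖u j‖) =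
      ‖u i‖ * ‖u j‖ - if i = j then ‖u i‖ ^ 2 else 0 := by
    split_ifs with h
    · rw [h, pow_two, sub_self]
    · rw [sub_zero]
  have hpow := sq_sum_le_card_mul_sum_sq (s := Finset.univ) (f := fun i => ‖u i‖)
  rw [Finset.card_univ, ← div_le_iff₀' (by exact_mod_cast Fintype.card_pos)] at hpow
  simp only [hoff, Finset.sum_sub_distrib, Finset.sum_ite_eq, Finset.mem_univ, if_true,
    ← Finset.mul_sum, ← Finset.sum_mul]
  rw [sub_mul, one_mul, one_div_mul_eq_div, ← pow_two]
  exact sub_le_sub_left hpow _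

/-- Cauchy–Schwarz with the weights `‖u i‖ * ‖u j‖` off the diagonal. -/
theorem sq_sum_sum_abs_det2_le [Nonempty ι] :
    (∑ i, ∑ j, |det2 (u i) (u j)|) ^ 2 ≤
      (1 - 1 / (Fintype.card ι : ℝ)) / 2 * (∑ i, ‖u i‖) ^ 4 := by
  classical
  have hcs : (∑ x : ι × ι, |det2 (u x.1) (u x.2)|) ^ 2 ≤
      (∑ x : ι × ι, det2 (u x.1) (u x.2) ^ 2 / (‖u x.1‖ * ‖u x.2‖)) *
        ∑ x : ι × ι, if x.1 = x.2 then 0 else ‖u x.1‖ * ‖u x.2‖ := by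
    refine Finset.sum_sq_le_sum_mul_sum_of_sq_le_mul _ (fun x _ => by positivity)
      (fun x _ => by positivity) fun x _ => ?_
    rw [sq_abs]
    split_ifs with h
    · simp [h, det2_self]
    · exact sq_det2_le _ _
  simp only [Fintype.sum_prod_type] at hcs
  have hdouble := two_mul_sum_sum_sq_det2_div_le u
  calc (∑ i, ∑ j, |det2 (u i) (u j)|) ^ 2
      ≤ (∑ i, ∑ j, det2 (u i) (u j) ^ 2 / (‖u i‖ * ‖u j‖)) *
          ∑ i, ∑ j, if i = j then 0 else ‖u i‖ * ‖u j‖ := hcs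
    _ ≤ (∑ i, ‖u i‖) ^ 2 / 2 * ((1 - 1 / (Fintype.card ι : ℝ)) * (∑ i, ‖u i‖) ^ 2) := by
        gcongr
        · linarith
        · exact sum_sum_offDiag_norm_mul_norm_le u
    _ = _ := by ring

theorem two_sqrt_three_mul_abs_det2_add_le (u v w : E2) :
    2 * √3 * (|det2 u v| + |det2 v w| + |det2 u w|) ≤ (‖u‖ + ‖v‖ + ‖w‖) ^ 2 := by
  have h := sq_sum_sum_abs_det2_le ![u, v, w]
  have hswap (p q : E2) : |det2 p q| = |det2 q p| := by rw [← neg_det2, abs_neg]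
  simp only [Fin.sum_univ_three, Matrix.cons_val, det2_self, abs_zero, Fintype.card_fin,
    hswap v u, hswap w u, hswap w v] at h
  refine le_of_sq_le_sq ?_ (by positivity)
  rw [mul_pow, mul_pow, sq_sqrt zero_le_three]
  linarith

end DoubleAngle

section Hexagon

open scoped Pointwise

theorem convexHull_range_parallelogram (p q : E2) :
    convexHull ℝ (range ![p, q, -p, -q]) = absConvexHull ℝ {p, q} := by
  rw [← convexHull_union_neg_eq_absConvexHull]
  congr 1
  simp only [Matrix.range_cons, Matrix.range_empty, union_empty, Set.neg_insert, Set.neg_singleton,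
    singleton_union, insert_union]

theorem convexHull_range_hexagon (p q r : E2) :
    convexHull ℝ (range ![p, q, r, -p, -q, -r]) = absConvexHull ℝ {p, q, r} := by
  rw [← convexHull_union_neg_eq_absConvexHull]
  congr 1
  simp only [Matrix.range_cons, Matrix.range_empty, union_empty, Set.neg_insert, Set.neg_singleton,
    singleton_union, insert_union]

theorem isConvexPolygonAroundZero_parallelogram {p q : E2} (h : 0 < det2 p q) :
    IsConvexPolygonAroundZero ![p, q, -p, -q] where
  det2_pos i := by
    fin_cases i <;> simp [det2_neg_left, det2_neg_right, ← neg_det2 p q, h]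
  det2_lt i j hi hj := by
    fin_cases i <;> fin_cases j <;> first | exact absurd rfl hi | exact absurd rfl hj | skip
    all_goals
      simp only [Fin.zero_eta, Fin.mk_one, Fin.reduceFinMk, Fin.reduceAdd, Fin.isValue,
        Matrix.cons_val, zero_add, det2_sub_right, det2_neg_left, det2_neg_right, det2_self,
        ← neg_det2 p q]
      linarith

theorem isConvexPolygonAroundZero_hexagon {p q r : E2} (hpq : det2 p q < det2 q r + det2 p r)
    (hqr : det2 q r < det2 p q + det2 p r) (hpr : det2 p r < det2 p q + det2 q r) :
    IsConvexPolygonAroundZero ![p, q, r, -p, -q, -r] where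
  det2_pos i := by
    fin_cases i <;>
      simp only [Fin.zero_eta, Fin.mk_one, Fin.reduceFinMk, Fin.reduceAdd, Fin.isValue,
        Matrix.cons_val, zero_add, det2_neg_left, det2_neg_right, ← neg_det2 p r] <;> linarith
  det2_lt i j hi hj := by
    fin_cases i <;> fin_cases j <;> first | exact absurd rfl hi | exact absurd rfl hj | skip
    all_goals
      simp only [Fin.zero_eta, Fin.mk_one, Fin.reduceFinMk, Fin.reduceAdd, Fin.isValue,
        Matrix.cons_val, zero_add, det2_sub_right, det2_neg_left, det2_neg_right, det2_self,
        ← neg_det2 p q, ← neg_det2 q r, ← neg_det2 p r]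
      linarith

theorem volume_absConvexHull_eq_zero {s : Set E2} (hs : ∀ x ∈ s, ∀ y ∈ s, det2 x y = 0) :
    volume (absConvexHull ℝ s) = 0 := by
  obtain ⟨v, hv, hvs⟩ : ∃ v : E2, v ≠ 0 ∧ ∀ x ∈ s, det2 v x = 0 := by
    by_cases h : ∃ v ∈ s, v ≠ 0
    · exact h.imp fun v hv => ⟨hv.2, hs v hv.1⟩
    · push Not at h
      exact (exists_ne 0).imp fun v hv => ⟨hv, fun x hx => by simp [h x hx, det2]⟩
  refine measure_mono_null (absConvexHull_min hvs ⟨?_, ?_⟩) (volume_det2_eq_zero hv)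
  · rintro a - _ ⟨x, hx, rfl⟩
    change det2 v (a • x) = 0
    rw [det2_smul_right, show det2 v x = 0 from hx, mul_zero]
  · exact convex_hyperplane ⟨det2_add_right v, fun c => det2_smul_right c v⟩ 0

theorem absConvexHull_insert_eq_of_mem {E : Type*} [AddCommGroup E] [Module ℝ E] {x : E}
    {s : Set E} (hx : x ∈ absConvexHull ℝ s) :
    absConvexHull ℝ (insert x s) = absConvexHull ℝ s :=
  (absConvexHull_min (insert_subset hx subset_absConvexHull) absConvex_absConvexHull).antisymm
    (absConvexHull_mono (subset_insert _ _))

theorem absConvexHull_insert_neg {E : Type*} [AddCommGroup E] [Module ℝ E] (x : E) (s : Set E) :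
    absConvexHull ℝ (insert (-x) s) = absConvexHull ℝ (insert x s) := by
  rw [← convexHull_union_neg_eq_absConvexHull, ← convexHull_union_neg_eq_absConvexHull]
  congr 1
  simp only [Set.neg_insert, neg_neg, insert_union, union_insert]
  exact insert_comm _ _ _

theorem smul_add_smul_mem_absConvexHull {E : Type*} [AddCommGroup E] [Module ℝ E] {s : Set E}
    {x y : E} (hx : x ∈ s) (hy : y ∈ s) {a b : ℝ} (hab : |a| + |b| ≤ 1) :
    a • x + b • y ∈ absConvexHull ℝ s := by
  have hscale {c : ℝ} {z : E} (hz : z ∈ s) : c • z ∈ |c| • absConvexHull ℝ s :=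
    balanced_absConvexHull.smul_mono (norm_abs_eq_norm c).ge
      (smul_mem_smul_set (subset_absConvexHull hz))
  have hsum := add_mem_add (hscale (c := a) hx) (hscale (c := b) hy)
  rw [← convex_absConvexHull.add_smul (abs_nonneg a) (abs_nonneg b)] at hsum
  simpa using balanced_absConvexHull.smul_mono (b := (1 : ℝ))
    (by rwa [norm_one, Real.norm_of_nonneg (by positivity)]) hsum

theorem mem_absConvexHull_pair {p q r : E2} (h0 : det2 p r ≠ 0)
    (h : |det2 p q| + |det2 q r| ≤ |det2 p r|) : q ∈ absConvexHull ℝ {p, r} := by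
  rw [eq_smul_add_smul_of_det2_ne_zero h0 q]
  refine smul_add_smul_mem_absConvexHull (by simp) (by simp) ?_
  rwa [abs_div, abs_div, ← add_div, div_le_one (abs_pos.2 h0), add_comm]

theorem sum_det2_hexagon (p q r : E2) :
    ∑ i, det2 (![p, q, r, -p, -q, -r] i) (![p, q, r, -p, -q, -r] (i + 1)) =
      2 * (det2 p q + det2 q r + det2 p r) := by
  simp only [Fin.sum_univ_six, Fin.reduceAdd, Fin.isValue, Matrix.cons_val, zero_add,
    det2_neg_left, det2_neg_right, ← neg_det2 p r]
  ring

theorem sum_norm_sub_hexagon (p q r : E2) :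
    ∑ i, ‖![p, q, r, -p, -q, -r] (i + 1) - ![p, q, r, -p, -q, -r] i‖ =
      2 * (‖q - p‖ + ‖r - q‖ + ‖r + p‖) := by
  have hneg (x y : E2) : ‖-x + y‖ = ‖x - y‖ := by rw [← norm_neg]; congr 1; abel
  have hlast : ‖-p - r‖ = ‖r + p‖ := by rw [← norm_neg]; congr 1; abel
  simp only [Fin.sum_univ_six, Fin.reduceAdd, Fin.isValue, Matrix.cons_val, zero_add, hneg, hlast,
    sub_neg_eq_add, add_comm p r]
  ring

/-- The isoperimetric inequality `8√3 · |K| ≤ 𝓗¹(∂K)²`, in which the regular hexagon attains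
equality. -/
def HexIsoperimetric (K : Set E2) : Prop :=
  ENNReal.ofReal (8 * √3) * volume K ≤ μH[1] (frontier K) ^ 2

theorem hexIsoperimetric_of_volume_eq_zero {K : Set E2} (hK : volume K = 0) :
    HexIsoperimetric K := by
  simp only [HexIsoperimetric, hK, mul_zero, zero_le]

theorem hexIsoperimetric_hexagon {p q r : E2} (hpq : det2 p q < det2 q r + det2 p r)
    (hqr : det2 q r < det2 p q + det2 p r) (hpr : det2 p r < det2 p q + det2 q r) :
    HexIsoperimetric (absConvexHull ℝ {p, q, r}) := by
  rw [← convexHull_range_hexagon]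
  refine (isConvexPolygonAroundZero_hexagon hpq hqr hpr).mul_volume_le_sq_hausdorffMeasure_frontier
    (by positivity) ?_
  have h := two_sqrt_three_mul_abs_det2_add_le (q - p) (r - q) (r + p)
  have hdet : det2 p q + det2 q r + det2 p r ≤
      |det2 (q - p) (r - q)| + |det2 (r - q) (r + p)| + |det2 (q - p) (r + p)| := by
    calc det2 p q + det2 q r + det2 p r
        = det2 (q - p) (r - q) + -det2 (r - q) (r + p) + -det2 (q - p) (r + p) := by
          simp only [det2, PiLp.sub_apply, PiLp.add_apply]; ring
      _ ≤ _ := by gcongr <;> apply_rules [le_abs_self, neg_le_abs]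
  rw [sum_det2_hexagon, sum_norm_sub_hexagon]
  nlinarith [mul_le_mul_of_nonneg_left hdet (sqrt_nonneg 3)]

theorem sum_det2_parallelogram (p q : E2) :
    ∑ i, det2 (![p, q, -p, -q] i) (![p, q, -p, -q] (i + 1)) = 4 * det2 p q := by
  simp only [Fin.sum_univ_four, Fin.reduceAdd, Fin.isValue, Matrix.cons_val, zero_add,
    det2_neg_left, det2_neg_right, ← neg_det2 p q]
  ring

theorem sum_norm_sub_parallelogram (p q : E2) :
    ∑ i, ‖![p, q, -p, -q] (i + 1) - ![p, q, -p, -q] i‖ = 2 * (‖q - p‖ + ‖q + p‖) := by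
  have hneg (x y : E2) : ‖-x + y‖ = ‖x - y‖ := by rw [← norm_neg]; congr 1; abel
  have hnext : ‖-p - q‖ = ‖q + p‖ := by rw [← norm_neg]; congr 1; abel
  simp only [Fin.sum_univ_four, Fin.reduceAdd, Fin.isValue, Matrix.cons_val, zero_add, hneg, hnext,
    sub_neg_eq_add, add_comm p q]
  ring

theorem hexIsoperimetric_parallelogram {p q : E2} (hpq : 0 < det2 p q) :
    HexIsoperimetric (absConvexHull ℝ {p, q}) := by
  rw [← convexHull_range_parallelogram]
  refine (isConvexPolygonAroundZero_parallelogram hpq).mul_volume_le_sq_hausdorffMeasure_frontier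
    (by positivity) ?_
  have h := two_sqrt_three_mul_abs_det2_add_le (q - p) (q + p) 0
  have hdet : 2 * det2 p q ≤ |det2 (q - p) (q + p)| := by
    calc 2 * det2 p q
        = -det2 (q - p) (q + p) := by simp only [det2, PiLp.sub_apply, PiLp.add_apply]; ring
      _ ≤ _ := neg_le_abs _
  have h0 (x : E2) : det2 x 0 = 0 := by simp [det2]
  simp only [h0, abs_zero, norm_zero, add_zero] at h
  rw [sum_det2_parallelogram, sum_norm_sub_parallelogram]
  nlinarith [mul_le_mul_of_nonneg_left hdet (sqrt_nonneg 3)]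

theorem hexIsoperimetric_absConvexHull_pair (p q : E2) :
    HexIsoperimetric (absConvexHull ℝ {p, q}) := by
  rcases lt_trichotomy (det2 p q) 0 with h | h | h
  · rw [pair_comm]
    exact hexIsoperimetric_parallelogram (by rwa [← neg_det2, neg_pos])
  · exact hexIsoperimetric_of_volume_eq_zero
      (volume_absConvexHull_eq_zero (by simp [det2_self, h, ← neg_det2 p q]))
  · exact hexIsoperimetric_parallelogram h

theorem hexIsoperimetric_of_abs_det2_add_le {p q r : E2}
    (h : |det2 p q| + |det2 q r| ≤ |det2 p r|) :
    HexIsoperimetric (absConvexHull ℝ {q, p, r}) := by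
  rcases eq_or_ne (det2 p r) 0 with h0 | h0
  · have hpq : det2 p q = 0 := abs_nonpos_iff.1 (by
      rw [h0, abs_zero] at h; linarith [abs_nonneg (det2 q r)])
    have hqr : det2 q r = 0 := abs_nonpos_iff.1 (by
      rw [h0, abs_zero] at h; linarith [abs_nonneg (det2 p q)])
    exact hexIsoperimetric_of_volume_eq_zero (volume_absConvexHull_eq_zero (by
      simp [det2_self, h0, hpq, hqr, ← neg_det2 p q, ← neg_det2 q r, ← neg_det2 p r]))
  · rw [absConvexHull_insert_eq_of_mem (mem_absConvexHull_pair h0 h)]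
    exact hexIsoperimetric_absConvexHull_pair p r

theorem exists_absConvexHull_eq_of_abs_det2_lt {p q r : E2}
    (hpq : |det2 p q| < |det2 q r| + |det2 p r|) (hqr : |det2 q r| < |det2 p q| + |det2 p r|)
    (hpr : |det2 p r| < |det2 p q| + |det2 q r|) :
    ∃ u v w, absConvexHull ℝ {u, v, w} = absConvexHull ℝ {p, q, r} ∧
      det2 u v < det2 v w + det2 u w ∧ det2 v w < det2 u v + det2 u w ∧
        det2 u w < det2 u v + det2 v w := by
  wlog hq : 0 ≤ det2 p q generalizing q
  · have := this (q := -q)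
    simp only [det2_neg_left, det2_neg_right, abs_neg] at this
    simpa only [insert_comm p, absConvexHull_insert_neg] using
      this hpq hqr hpr (neg_nonneg.2 (le_of_not_ge hq))
  wlog hr : 0 ≤ det2 p r generalizing r
  · have := this (r := -r)
    simp only [det2_neg_right, abs_neg] at this
    simpa only [pair_comm _ (-r), pair_comm _ r, insert_comm p, absConvexHull_insert_neg] using
      this hpq hqr hpr (neg_nonneg.2 (le_of_not_ge hr))
  rw [abs_of_nonneg hq, abs_of_nonneg hr] at *
  rcases le_total 0 (det2 q r) with h | h
  · rw [abs_of_nonneg h] at *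
    exact ⟨p, q, r, rfl, hpq, hqr, hpr⟩
  · rw [abs_of_nonpos h, neg_det2] at *
    exact ⟨p, r, q, by rw [pair_comm], by linarith, by linarith, by linarith⟩

theorem hexIsoperimetric_absConvexHull_triple (p q r : E2) :
    HexIsoperimetric (absConvexHull ℝ {p, q, r}) := by
  have hswap (x y : E2) : |det2 x y| = |det2 y x| := by rw [← neg_det2, abs_neg]
  rcases le_or_gt (|det2 q p| + |det2 p r|) |det2 q r| with hp | hp
  · exact hexIsoperimetric_of_abs_det2_add_le hp
  rcases le_or_gt (|det2 p q| + |det2 q r|) |det2 p r| with hq | hq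
  · rw [insert_comm]
    exact hexIsoperimetric_of_abs_det2_add_le hq
  rcases le_or_gt (|det2 p r| + |det2 r q|) |det2 p q| with hr | hr
  · rw [pair_comm q r, insert_comm]
    exact hexIsoperimetric_of_abs_det2_add_le hr
  rw [hswap q p] at hp
  rw [hswap r q, add_comm] at hr
  obtain ⟨u, v, w, heq, huv, hvw, huw⟩ :=
    exists_absConvexHull_eq_of_abs_det2_lt hr hp hq
  rw [← heq]
  exact hexIsoperimetric_hexagon huv hvw huw

end Hexagon

section RegularHexagon

theorem Hex.hexIsoperimetric {H : Set E2} (hH : Hex H) : HexIsoperimetric H := by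
  obtain ⟨⟨x₀, p, q, r, rfl⟩, -⟩ := hH
  have hhull : convexHull ℝ {p, q, r, -p, -q, -r} = absConvexHull ℝ {p, q, r} := by
    rw [← convexHull_range_hexagon]
    congr 1
    simp only [Matrix.range_cons, Matrix.range_empty, union_empty, singleton_union]
  have hdist (x y : E2) : dist (x₀ + x) (x₀ + y) = 1 * dist x y := by simp
  rw [HexIsoperimetric, frontier_image_of_dist_eq one_pos hdist,
    volume_image_of_dist_eq one_pos hdist,
    hausdorffMeasure_image_of_dist_eq one_pos hdist zero_le_one, ENNReal.ofReal_one, one_pow,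
    ENNReal.one_rpow, one_mul, one_mul, hhull]
  exact hexIsoperimetric_absConvexHull_triple p q r

theorem hexVertex_apply_zero (k : ℕ) : hexVertex k 0 = cos (k * π / 3) := rfl

theorem hexVertex_apply_one (k : ℕ) : hexVertex k 1 = sin (k * π / 3) := rfl

theorem hexVertex_add_two (k : ℕ) : hexVertex (k + 2) = hexVertex (k + 1) - hexVertex k := by
  have hnext : ((k + 2 : ℕ) : ℝ) * π / 3 = (k + 1 : ℕ) * π / 3 + π / 3 := by push_cast; ring
  have hprev : k * π / 3 = (k + 1 : ℕ) * π / 3 - π / 3 := by push_cast; ring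
  ext i
  fin_cases i
  · simp only [Fin.zero_eta, PiLp.sub_apply, hexVertex_apply_zero]
    rw [hnext, hprev, cos_add, cos_sub, cos_pi_div_three]
    ring
  · simp only [Fin.mk_one, PiLp.sub_apply, hexVertex_apply_one]
    rw [hnext, hprev, sin_add, sin_sub, cos_pi_div_three]
    ring

theorem hexVertex_add_three (k : ℕ) : hexVertex (k + 3) = -hexVertex k := by
  rw [hexVertex_add_two (k + 1), hexVertex_add_two k, sub_sub_cancel_left]

theorem norm_hexVertex (k : ℕ) : ‖hexVertex k‖ = 1 := by
  simp [EuclideanSpace.norm_eq, hexVertex_apply_zero, hexVertex_apply_one]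

theorem det2_hexVertex_succ (k : ℕ) : det2 (hexVertex k) (hexVertex (k + 1)) = √3 / 2 := by
  rw [← sin_pi_div_three, show π / 3 = (k + 1 : ℕ) * π / 3 - k * π / 3 by push_cast; ring, sin_sub]
  simp only [det2, hexVertex_apply_zero, hexVertex_apply_one]
  ring

theorem stdHexagon_eq :
    stdHexagon = convexHull ℝ (range ![hexVertex 0, hexVertex 1, hexVertex 2,
      -hexVertex 0, -hexVertex 1, -hexVertex 2]) := by
  rw [stdHexagon]
  congr 2
  funext k
  fin_cases k <;> simp [← hexVertex_add_three]

theorem det2_hexVertex_zero_two : det2 (hexVertex 0) (hexVertex 2) = √3 / 2 := by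
  rw [hexVertex_add_two 0, det2_sub_right, det2_self, sub_zero, det2_hexVertex_succ]

theorem isConvexPolygonAroundZero_stdHexagon :
    IsConvexPolygonAroundZero ![hexVertex 0, hexVertex 1, hexVertex 2,
      -hexVertex 0, -hexVertex 1, -hexVertex 2] := by
  have h : 0 < √3 / 2 := by positivity
  apply isConvexPolygonAroundZero_hexagon <;>
    rw [det2_hexVertex_succ 0, det2_hexVertex_succ 1, det2_hexVertex_zero_two] <;> linarith

theorem volume_stdHexagon : volume stdHexagon = ENNReal.ofReal (3 * √3 / 2) := by
  rw [stdHexagon_eq, isConvexPolygonAroundZero_stdHexagon.volume_convexHull_range, sum_det2_hexagon,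
    det2_hexVertex_succ 0, det2_hexVertex_succ 1, det2_hexVertex_zero_two]
  ring_nf

theorem hausdorffMeasure_frontier_stdHexagon : μH[1] (frontier stdHexagon) = ENNReal.ofReal 6 := by
  have hadd : hexVertex 2 + hexVertex 0 = hexVertex 1 := by
    rw [hexVertex_add_two 0, sub_add_cancel]
  rw [stdHexagon_eq,
    isConvexPolygonAroundZero_stdHexagon.hausdorffMeasure_frontier_convexHull_range,
    sum_norm_sub_hexagon, hadd, ← hexVertex_add_two 0, ← hexVertex_add_two 1]
  simp only [norm_hexVertex]
  norm_num

theorem IsRegularHexagon.sq_hausdorffMeasure_frontier {H : Set E2} (hH : IsRegularHexagon H) :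
    μH[1] (frontier H) ^ 2 = ENNReal.ofReal (8 * √3) * volume H := by
  obtain ⟨f, ⟨s, hs, hf⟩, rfl⟩ := hH
  have hstd : ENNReal.ofReal 6 ^ 2 = ENNReal.ofReal (8 * √3) * ENNReal.ofReal (3 * √3 / 2) := by
    rw [← ENNReal.ofReal_pow (by norm_num), ← ENNReal.ofReal_mul (by positivity)]
    congr 1
    linarith [mul_self_sqrt zero_le_three]
  rw [frontier_image_of_dist_eq hs hf, volume_image_of_dist_eq hs hf,
    hausdorffMeasure_image_of_dist_eq hs hf zero_le_one, ENNReal.rpow_one, mul_pow,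
    hausdorffMeasure_frontier_stdHexagon, hstd, volume_stdHexagon, mul_left_comm]

end RegularHexagon

theorem statement9_general {Hstar H : Set E2} (hreg : IsRegularHexagon Hstar) (hH : Hex H)
    (hvol : volume Hstar ≤ volume H) : μH[1] (frontier Hstar) ≤ μH[1] (frontier H) := by
  refine (ENNReal.pow_le_pow_left_iff two_ne_zero).1 ?_
  calc μH[1] (frontier Hstar) ^ 2
      = ENNReal.ofReal (8 * √3) * volume Hstar := hreg.sq_hausdorffMeasure_frontier
    _ ≤ ENNReal.ofReal (8 * √3) * volume H := by gcongr
    _ ≤ μH[1] (frontier H) ^ 2 := hH.hexIsoperimetric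

/-- Among convex polygons of unit area tiling the plane by translations,
the regular hexagon minimizes the perimeter. -/
theorem statement9 (Hstar : Set E2) (hreg : IsRegularHexagon Hstar)
    (hvolstar : volume Hstar = 1) :
    ∀ H : Set E2, Hex H → volume H = 1 →
      μH[1] (frontier Hstar) ≤ μH[1] (frontier H) :=
  fun _ hH hvol => statement9_general hreg hH (hvolstar.trans hvol.symm).le
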